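/- Maximal second-moment bound (Lemma 3.4): for all T > 0, L ≥ 0, g₀ ≥ 0, A > 0 and B ≥ 0 there exists a constant C ≥ 0, depending only on T, L, g₀, A, B, such that for every N ≥ 1, every discrete setting (V, m, τ) with Σ_{K∈V} m K ≤ A, every g Lipschitz with constant L and |g(0)| ≤ g₀, and every initial datum with E[‖u⁰‖_m²] ≤ B, the scheme solution satisfies E[max_{n∈{0,…,N}} ‖u^n‖_m²] ≤ C. -/

import Mathlib

open MeasureTheory ProbabilityTheory

/-- Discrete `L²` norm squared: `‖w‖_m² = Σ_K m K · (w K)²`. -/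
noncomputable def normSq {V : Type} [Fintype V] (m : V → ℝ) (w : V → ℝ) : ℝ :=
  ∑ K, m K * w K ^ 2

/-- Discrete `H¹` seminorm squared: `|w|₁² = (1/2) Σ_K Σ_L τ K L · (w K − w L)²`. -/
noncomputable def seminormSq {V : Type} [Fintype V] (τ : V → V → ℝ) (w : V → ℝ) : ℝ :=
  (1 / 2) * ∑ K, ∑ L, τ K L * (w K - w L) ^ 2

/-- The semi-implicit finite-volume scheme for the stochastic heat equation, in
abstract graph form, together with all the structural assumptions of the paper:
cell measures `m`, symmetric nonnegative transmissibilities `τ`, time horizon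
`T > 0` divided into `N ≥ 1` steps of size `Δt = T/N`, a discrete filtration
`G`, Gaussian increments `ΔW` (each `ΔW (n+1)` is `G (n+1)`-measurable,
independent of `G n`, centred with variance `Δt`), a Lipschitz nonlinearity `g`
(constant `L`), a square-integrable `G 0`-measurable initial datum `u 0`, and the
scheme equations defining `u (n+1)` from `u n`. -/
structure Scheme (V : Type) [Fintype V] [Nonempty V]
    (Ω : Type) [mΩ : MeasurableSpace Ω]
    (T L : ℝ) (g : ℝ → ℝ) (N : ℕ) where
  P : Measure Ω
  probP : IsProbabilityMeasure P
  m : V → ℝ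
  m_pos : ∀ K, 0 < m K
  τ : V → V → ℝ
  τ_symm : ∀ K L', τ K L' = τ L' K
  τ_nonneg : ∀ K L', 0 ≤ τ K L'
  τ_diag : ∀ K, τ K K = 0
  T_pos : 0 < T
  N_pos : 1 ≤ N
  L_nonneg : 0 ≤ L
  g_lip : ∀ r s : ℝ, |g r - g s| ≤ L * |r - s|
  G : ℕ → MeasurableSpace Ω
  G_le : ∀ n, G n ≤ mΩ
  G_mono : Monotone G
  ΔW : ℕ → Ω → ℝ
  ΔW_meas : ∀ n, n < N → Measurable[G (n + 1)] (ΔW (n + 1))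
  ΔW_indep : ∀ n, n < N →
    Indep (MeasurableSpace.comap (ΔW (n + 1)) Real.measurableSpace) (G n) P
  ΔW_law : ∀ n, n < N →
    P.map (ΔW (n + 1)) = gaussianReal 0 (Real.toNNReal (T / N))
  u : ℕ → Ω → V → ℝ
  u_meas : ∀ n, n ≤ N → Measurable[G n] (u n)
  u0_int : Integrable (fun ω => normSq m (u 0 ω)) P
  scheme : ∀ n, n < N → ∀ᵐ ω ∂P, ∀ K,
    m K / (T / N) * (u (n + 1) ω K - u n ω K)
      + ∑ L', τ K L' * (u (n + 1) ω K - u (n + 1) ω L')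
      = m K / (T / N) * g (u n ω K) * ΔW (n + 1) ω

/-!
The weights `√(m K)` embed the scheme into a Euclidean space, where testing the implicit step with
its own solution shows that `‖u_{n+1}‖ ≤ ‖u_n + ξ_n γ_n‖` with `ξ_n = ΔW_{n+1}` and `γ_n` the image
of `g(u_n)`, so that `‖γ_n‖² ≤ c (1 + ‖u_n‖²)`. Let `⟨x⟩ = √(1 + ‖x‖²)`. Then `⟨u_n⟩` is bounded by

  `M_n = ⟨u_0⟩ + ∑_{k<n} (⟨u_k + ξ_k γ_k⟩ - ⟨u_k⟩)`,

which is a submartingale because `⟨·⟩` is convex and `ξ_k` is centred and independent of the past.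
The expansion `⟨x + y⟩ - ⟨x⟩ ≤ ⟪x, y⟫ / ⟨x⟩ + ‖y‖² / (2 ⟨x⟩)` gives
`E[M_{n+1}²] ≤ (1 + 2 c E[ξ_n²]) E[M_n²]`, so Grönwall bounds `E[M_N²]` and Doob's `L²` inequality
for the nonnegative submartingale `M` bounds the maximum. Passing to `M` rather than expanding
`‖u_n‖²` keeps the argument at the level of second moments: no fourth moment of `ξ_n` is needed.
-/

section SquareIntegrable

variable {Ω : Type*} {mΩ : MeasurableSpace Ω} {P : Measure Ω}

lemma integral_add_sq {f h : Ω → ℝ} (hf : MemLp f 2 P) (hh : MemLp h 2 P) :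
    ∫ ω, (f ω + h ω) ^ 2 ∂P = ∫ ω, f ω ^ 2 ∂P + 2 * ∫ ω, f ω * h ω ∂P + ∫ ω, h ω ^ 2 ∂P := by
  have hcross : Integrable (fun ω => 2 * (f ω * h ω)) P := (hf.integrable_mul hh).const_mul 2
  have hfirst : Integrable (fun ω => f ω ^ 2 + 2 * (f ω * h ω)) P := hf.integrable_sq.add hcross
  rw [← integral_const_mul, ← integral_add hf.integrable_sq hcross,
    ← integral_add hfirst hh.integrable_sq]
  congr with ω
  ring

lemma memLp_of_sq_norm_le {E : Type*} [NormedAddCommGroup E] {p : ENNReal} {γ : Ω → E}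
    {F : Ω → ℝ} {c : ℝ} (hγ : AEStronglyMeasurable γ P) (hF : MemLp F p P)
    (hγF : ∀ᵐ ω ∂P, ‖γ ω‖ ^ 2 ≤ c * F ω ^ 2) : MemLp γ p P := by
  refine hF.of_le_mul (c := √c) hγ ?_
  filter_upwards [hγF] with ω hω
  rw [Real.norm_eq_abs, ← Real.sqrt_sq_eq_abs, ← Real.sqrt_mul' c (sq_nonneg _)]
  exact Real.le_sqrt_of_sq_le hω

end SquareIntegrable

section Doob

variable {Ω : Type*} {mΩ : MeasurableSpace Ω} {P : Measure Ω} {𝓖 : Filtration ℕ mΩ}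
  {M : ℕ → Ω → ℝ}

lemma stronglyAdapted_partialSups (hM : StronglyAdapted 𝓖 M) :
    StronglyAdapted 𝓖 (partialSups M) := by
  intro n
  induction n with
  | zero => simpa using hM 0
  | succ n ih =>
    rw [partialSups_add_one]
    exact @StronglyMeasurable.sup _ _ _ _ (𝓖 (n + 1)) _ _ _ (ih.mono (𝓖.mono n.le_succ))
      (hM (n + 1))

lemma memLp_partialSups {p : ENNReal} (hM : ∀ n, MemLp (M n) p P) (n : ℕ) :
    MemLp (partialSups M n) p P := by
  induction n with
  | zero => simpa using hM 0
  | succ n ih =>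
    rw [partialSups_add_one]
    exact ih.sup (hM (n + 1))

lemma integral_mul_sub_nonneg_of_submartingale [IsFiniteMeasure P] (hM : Submartingale M 𝓖 P)
    {i j : ℕ} (hij : i ≤ j) {F : Ω → ℝ} (hF : StronglyMeasurable[𝓖 i] F) (hF0 : 0 ≤ F)
    (hFM : Integrable (F * (M j - M i)) P) : 0 ≤ ∫ ω, (F * (M j - M i)) ω ∂P := by
  rw [← integral_condExp (𝓖.le i)]
  refine integral_nonneg_of_ae ?_
  filter_upwards [hM.condExp_sub_nonneg hij,
    condExp_mul_of_stronglyMeasurable_left hF hFM ((hM.integrable j).sub (hM.integrable i))]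
    with ω hpos hpull
  rw [hpull]
  exact mul_nonneg (hF0 ω) hpos

/-- The pathwise inequality behind Doob's `L²` inequality: with `a` the running maximum, the last
term is the gain over one step of the nonnegative predictable strategy `a`. -/
lemma sq_max_sub_le (a x y : ℝ) :
    max a y ^ 2 - 2 * (max a y * y) ≤ a ^ 2 - 2 * (a * x) - 2 * (a * (y - x)) := by
  rcases max_cases a y with ⟨h, -⟩ | ⟨h, -⟩ <;> rw [h]
  · linarith
  · linarith [sq_nonneg (a - y)]

lemma integral_sq_partialSups_sub_two_mul_nonpos [IsFiniteMeasure P] (hM : Submartingale M 𝓖 P)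
    (hM0 : 0 ≤ M 0) (hM2 : ∀ n, MemLp (M n) 2 P) (n : ℕ) :
    ∫ ω, (partialSups M n ω ^ 2 - 2 * (partialSups M n ω * M n ω)) ∂P ≤ 0 := by
  have hS2 := memLp_partialSups hM2
  have hint (k l : ℕ) :
      Integrable (fun ω => partialSups M k ω ^ 2 - 2 * (partialSups M k ω * M l ω)) P :=
    (hS2 k).integrable_sq.sub (((hS2 k).integrable_mul (hM2 l)).const_mul 2)
  induction n with
  | zero =>
    refine integral_nonpos fun ω => ?_
    simp only [partialSups_zero, Pi.zero_apply]
    linarith [sq_nonneg (M 0 ω)]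
  | succ n ih =>
    have hinc : Integrable (partialSups M n * (M (n + 1) - M n)) P :=
      (hS2 n).integrable_mul ((hM2 (n + 1)).sub (hM2 n))
    have hinc_nonneg := integral_mul_sub_nonneg_of_submartingale hM n.le_succ
      (stronglyAdapted_partialSups hM.stronglyAdapted n)
      (hM0.trans (le_partialSups_of_le M n.zero_le)) hinc
    calc ∫ ω, (partialSups M (n + 1) ω ^ 2 - 2 * (partialSups M (n + 1) ω * M (n + 1) ω)) ∂P
        ≤ ∫ ω, (partialSups M n ω ^ 2 - 2 * (partialSups M n ω * M n ω)
            - 2 * (partialSups M n * (M (n + 1) - M n)) ω) ∂P := by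
          refine integral_mono (hint _ _) ((hint _ _).sub (hinc.const_mul 2)) fun ω => ?_
          simp only [partialSups_add_one]
          exact sq_max_sub_le _ _ _
      _ ≤ 0 := by
          rw [integral_sub (hint _ _) (hinc.const_mul 2), integral_const_mul]
          linarith

theorem integral_sq_partialSups_le [IsFiniteMeasure P] (hM : Submartingale M 𝓖 P)
    (hM0 : 0 ≤ M 0) (hM2 : ∀ n, MemLp (M n) 2 P) (n : ℕ) :
    ∫ ω, partialSups M n ω ^ 2 ∂P ≤ 4 * ∫ ω, M n ω ^ 2 ∂P := by
  have hS2 := memLp_partialSups hM2 n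
  have hint : Integrable
      (fun ω => partialSups M n ω ^ 2 - 2 * (partialSups M n ω * M n ω)) P :=
    hS2.integrable_sq.sub ((hS2.integrable_mul (hM2 n)).const_mul 2)
  calc ∫ ω, partialSups M n ω ^ 2 ∂P
      ≤ ∫ ω, (2 * (partialSups M n ω ^ 2 - 2 * (partialSups M n ω * M n ω))
          + 4 * M n ω ^ 2) ∂P := by
        refine integral_mono hS2.integrable_sq
          ((hint.const_mul 2).add ((hM2 n).integrable_sq.const_mul 4)) fun ω => ?_
        linarith [sq_nonneg (partialSups M n ω - 2 * M n ω)]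
    _ = 2 * ∫ ω, (partialSups M n ω ^ 2 - 2 * (partialSups M n ω * M n ω)) ∂P
          + 4 * ∫ ω, M n ω ^ 2 ∂P := by
        rw [integral_add (hint.const_mul 2) ((hM2 n).integrable_sq.const_mul 4),
          integral_const_mul, integral_const_mul]
    _ ≤ 4 * ∫ ω, M n ω ^ 2 ∂P := by
        linarith [integral_sq_partialSups_sub_two_mul_nonpos hM hM0 hM2 n]

end Doob

section Innovation

/-- `IsInnovation 𝓖 P n ξ`: the variable `ξ` is a centred, square-integrable noise revealed between
the times `n` and `n + 1` of the filtration `𝓖` and independent of the past `𝓖 n`. -/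
structure IsInnovation {Ω : Type*} {mΩ : MeasurableSpace Ω} (𝓖 : Filtration ℕ mΩ) (P : Measure Ω)
    (n : ℕ) (ξ : Ω → ℝ) : Prop where
  measurable : Measurable[𝓖 (n + 1)] ξ
  indep : Indep (MeasurableSpace.comap ξ inferInstance) (𝓖 n) P
  memLp : MemLp ξ 2 P
  integral_eq_zero : ∫ ω, ξ ω ∂P = 0

namespace IsInnovation

variable {Ω : Type*} {mΩ : MeasurableSpace Ω} {𝓖 : Filtration ℕ mΩ} {P : Measure Ω}
  {n : ℕ} {ξ F : Ω → ℝ}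

lemma zero [IsProbabilityMeasure P] : IsInnovation 𝓖 P n 0 where
  measurable := measurable_const
  indep := by
    rw [Pi.zero_def, MeasurableSpace.comap_const]
    exact indep_bot_left _
  memLp := MemLp.zero
  integral_eq_zero := by simp

lemma indepFun (hξ : IsInnovation 𝓖 P n ξ) (hF : StronglyMeasurable[𝓖 n] F) :
    IndepFun F ξ P := by
  rw [IndepFun_iff_Indep]
  exact (indep_of_indep_of_le_right hξ.indep hF.measurable.comap_le).symm

lemma indepFun_sq (hξ : IsInnovation 𝓖 P n ξ) (hF : StronglyMeasurable[𝓖 n] F) :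
    IndepFun F (fun ω => ξ ω ^ 2) P :=
  (hξ.indepFun hF).comp measurable_id (measurable_id.pow_const 2)

lemma integrable_mul [IsFiniteMeasure P] (hξ : IsInnovation 𝓖 P n ξ)
    (hF : StronglyMeasurable[𝓖 n] F) (hFi : Integrable F P) :
    Integrable (fun ω => F ω * ξ ω) P :=
  (hξ.indepFun hF).integrable_mul hFi (hξ.memLp.integrable one_le_two)

lemma integral_mul (hξ : IsInnovation 𝓖 P n ξ) (hF : StronglyMeasurable[𝓖 n] F) :
    ∫ ω, F ω * ξ ω ∂P = 0 := by
  rw [(hξ.indepFun hF).integral_fun_mul_eq_mul_integral (hF.mono (𝓖.le n)).aestronglyMeasurable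
    hξ.memLp.aestronglyMeasurable, hξ.integral_eq_zero, mul_zero]

lemma integrable_mul_sq (hξ : IsInnovation 𝓖 P n ξ) (hF : StronglyMeasurable[𝓖 n] F)
    (hFi : Integrable F P) : Integrable (fun ω => F ω * ξ ω ^ 2) P :=
  (hξ.indepFun_sq hF).integrable_mul hFi hξ.memLp.integrable_sq

lemma integral_mul_sq (hξ : IsInnovation 𝓖 P n ξ) (hF : StronglyMeasurable[𝓖 n] F) :
    ∫ ω, F ω * ξ ω ^ 2 ∂P = (∫ ω, F ω ∂P) * ∫ ω, ξ ω ^ 2 ∂P :=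
  (hξ.indepFun_sq hF).integral_fun_mul_eq_mul_integral (hF.mono (𝓖.le n)).aestronglyMeasurable
    (hξ.memLp.aestronglyMeasurable.pow 2)

lemma memLp_mul (hξ : IsInnovation 𝓖 P n ξ) (hF : StronglyMeasurable[𝓖 n] F)
    (hF2 : MemLp F 2 P) : MemLp (fun ω => F ω * ξ ω) 2 P := by
  refine (memLp_two_iff_integrable_sq
    (hF2.aestronglyMeasurable.mul hξ.memLp.aestronglyMeasurable)).2 ?_
  simpa only [Pi.pow_apply, Pi.mul_apply, mul_pow] using
    hξ.integrable_mul_sq (hF.pow 2) hF2.integrable_sq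

lemma condExp_mul [IsFiniteMeasure P] (hξ : IsInnovation 𝓖 P n ξ)
    (hF : StronglyMeasurable[𝓖 n] F) (hFi : Integrable F P) : P[F * ξ | 𝓖 n] =ᵐ[P] 0 := by
  have hcond : P[ξ | 𝓖 n] =ᵐ[P] fun _ => ∫ ω, ξ ω ∂P :=
    condExp_indep_eq (hξ.measurable.mono (𝓖.le _) le_rfl).comap_le (𝓖.le n)
      (comap_measurable ξ).stronglyMeasurable hξ.indep
  filter_upwards [hcond, condExp_mul_of_stronglyMeasurable_left hF (hξ.integrable_mul hF hFi)
    (hξ.memLp.integrable one_le_two)] with ω hω hpull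
  rw [hpull, Pi.mul_apply, hω, hξ.integral_eq_zero, mul_zero, Pi.zero_apply]

end IsInnovation

end Innovation

section JapaneseBracket

variable {E : Type*} [NormedAddCommGroup E]

/-- The Japanese bracket `⟨x⟩ = √(1 + ‖x‖²)`, a smooth convex substitute for the norm which is
bounded away from zero. -/
noncomputable def japaneseBracket (x : E) : ℝ := √(1 + ‖x‖ ^ 2)

/-- The increment `⟨x + y⟩ - ⟨x⟩` of the Japanese bracket. -/
noncomputable def bracketIncrement (x y : E) : ℝ := japaneseBracket (x + y) - japaneseBracket x

lemma sq_japaneseBracket (x : E) : japaneseBracket x ^ 2 = 1 + ‖x‖ ^ 2 :=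
  Real.sq_sqrt (by positivity)

lemma japaneseBracket_pos (x : E) : 0 < japaneseBracket x :=
  Real.sqrt_pos.2 (by positivity)

lemma norm_le_japaneseBracket (x : E) : ‖x‖ ≤ japaneseBracket x :=
  Real.le_sqrt_of_sq_le (by linarith)

lemma japaneseBracket_le_one_add_norm (x : E) : japaneseBracket x ≤ 1 + ‖x‖ :=
  Real.sqrt_le_iff.2 ⟨by positivity, by nlinarith [norm_nonneg x]⟩

lemma japaneseBracket_le_of_norm_le {x y : E} (h : ‖x‖ ≤ ‖y‖) :
    japaneseBracket x ≤ japaneseBracket y := by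
  unfold japaneseBracket
  gcongr

lemma continuous_japaneseBracket : Continuous (japaneseBracket : E → ℝ) := by
  unfold japaneseBracket
  fun_prop

variable {Ω : Type*} {mΩ : MeasurableSpace Ω} {P : Measure Ω}

lemma memLp_japaneseBracket [IsFiniteMeasure P] {p : ENNReal} {u : Ω → E} (hu : MemLp u p P) :
    MemLp (fun ω => japaneseBracket (u ω)) p P := by
  have hbound : MemLp (fun ω => 1 + ‖u ω‖) p P := (memLp_const (1 : ℝ)).add hu.norm
  refine hbound.mono'
    (continuous_japaneseBracket.comp_aestronglyMeasurable hu.aestronglyMeasurable)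
    (.of_forall fun ω => ?_)
  rw [Real.norm_of_nonneg (japaneseBracket_pos _).le]
  exact japaneseBracket_le_one_add_norm _

variable {H : Type*} [NormedAddCommGroup H] [InnerProductSpace ℝ H]

/-- The derivative `⟪x, y⟫ / ⟨x⟩` of the Japanese bracket at `x` in the direction `y`. -/
noncomputable def bracketDeriv (x y : H) : ℝ := inner ℝ x y / japaneseBracket x

lemma japaneseBracket_mul_bracketDeriv (x y : H) :
    japaneseBracket x * bracketDeriv x y = inner ℝ x y :=
  mul_div_cancel₀ _ (japaneseBracket_pos x).ne'

lemma bracketDeriv_smul (x y : H) (t : ℝ) : bracketDeriv x (t • y) = bracketDeriv x y * t := by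
  rw [bracketDeriv, bracketDeriv, inner_smul_right, mul_div_assoc, mul_comm]

lemma abs_bracketDeriv_le (x y : H) : |bracketDeriv x y| ≤ ‖y‖ := by
  rw [bracketDeriv, abs_div, abs_of_pos (japaneseBracket_pos x),
    div_le_iff₀' (japaneseBracket_pos x)]
  exact (abs_real_inner_le_norm x y).trans (by gcongr; exact norm_le_japaneseBracket x)

lemma sq_japaneseBracket_add (x y : H) :
    japaneseBracket (x + y) ^ 2 = japaneseBracket x ^ 2 + 2 * inner ℝ x y + ‖y‖ ^ 2 := by
  rw [sq_japaneseBracket, sq_japaneseBracket, norm_add_sq_real]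
  ring

lemma one_add_inner_le_japaneseBracket_mul (x y : H) :
    1 + inner ℝ x y ≤ japaneseBracket x * japaneseBracket y := by
  rw [japaneseBracket, japaneseBracket, ← Real.sqrt_mul (by positivity)]
  calc 1 + inner ℝ x y ≤ 1 + ‖x‖ * ‖y‖ := by gcongr; exact real_inner_le_norm x y
    _ ≤ √((1 + ‖x‖ ^ 2) * (1 + ‖y‖ ^ 2)) :=
      Real.le_sqrt_of_sq_le (by linarith [sq_nonneg (‖x‖ - ‖y‖)])

lemma bracketDeriv_le_bracketIncrement (x y : H) : bracketDeriv x y ≤ bracketIncrement x y := by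
  refine le_of_mul_le_mul_left ?_ (japaneseBracket_pos x)
  have h := one_add_inner_le_japaneseBracket_mul x (x + y)
  rw [inner_add_right, real_inner_self_eq_norm_sq] at h
  rw [japaneseBracket_mul_bracketDeriv, bracketIncrement, mul_sub, ← sq, sq_japaneseBracket]
  linarith

lemma bracketIncrement_le (x y : H) :
    bracketIncrement x y ≤ bracketDeriv x y + ‖y‖ ^ 2 / (2 * japaneseBracket x) := by
  have hx := japaneseBracket_pos x
  refine le_of_mul_le_mul_left ?_ hx
  have h := two_mul_le_add_sq (japaneseBracket x) (japaneseBracket (x + y))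
  rw [sq_japaneseBracket_add] at h
  calc japaneseBracket x * bracketIncrement x y ≤ inner ℝ x y + ‖y‖ ^ 2 / 2 := by
        rw [bracketIncrement]
        linarith
    _ = japaneseBracket x * (bracketDeriv x y + ‖y‖ ^ 2 / (2 * japaneseBracket x)) := by
        rw [mul_add, japaneseBracket_mul_bracketDeriv]
        field_simp

lemma abs_bracketIncrement_le (x y : H) : |bracketIncrement x y| ≤ ‖y‖ := by
  refine abs_le_of_sq_le_sq ?_ (norm_nonneg y)
  have hexpand : bracketIncrement x y ^ 2 = ‖y‖ ^ 2
      + 2 * (japaneseBracket x * bracketDeriv x y - japaneseBracket x * bracketIncrement x y) := by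
    rw [japaneseBracket_mul_bracketDeriv, bracketIncrement]
    linear_combination sq_japaneseBracket_add x y
  have hconvex := mul_le_mul_of_nonneg_left (bracketDeriv_le_bracketIncrement x y)
    (japaneseBracket_pos x).le
  linarith

lemma mul_bracketIncrement_smul_le {x y : H} {c r t : ℝ} (hc : 0 ≤ c)
    (hy : ‖y‖ ^ 2 ≤ c * japaneseBracket x ^ 2) (hr : japaneseBracket x ≤ r) :
    r * bracketIncrement x (t • y) ≤ r * bracketDeriv x y * t + c / 2 * (r ^ 2 * t ^ 2) := by
  have hx := japaneseBracket_pos x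
  have hr0 : 0 ≤ r := hx.le.trans hr
  have hsq : ‖t • y‖ ^ 2 / (2 * japaneseBracket x) ≤ c / 2 * (r * t ^ 2) := by
    rw [norm_smul, mul_pow, Real.norm_eq_abs, sq_abs, div_le_iff₀ (by positivity)]
    calc t ^ 2 * ‖y‖ ^ 2 ≤ t ^ 2 * (c * japaneseBracket x ^ 2) := by gcongr
      _ = c / 2 * (japaneseBracket x * t ^ 2) * (2 * japaneseBracket x) := by ring
      _ ≤ c / 2 * (r * t ^ 2) * (2 * japaneseBracket x) := by gcongr
  calc r * bracketIncrement x (t • y) ≤ r * (bracketDeriv x (t • y) + c / 2 * (r * t ^ 2)) := by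
        gcongr
        linarith [bracketIncrement_le x (t • y)]
    _ = r * bracketDeriv x y * t + c / 2 * (r ^ 2 * t ^ 2) := by
        rw [bracketDeriv_smul]
        ring

lemma stronglyMeasurable_bracketDeriv {m : MeasurableSpace Ω} {u γ : Ω → H}
    (hu : StronglyMeasurable[m] u) (hγ : StronglyMeasurable[m] γ) :
    StronglyMeasurable[m] (fun ω => bracketDeriv (u ω) (γ ω)) :=
  (hu.inner hγ).div (continuous_japaneseBracket.comp_stronglyMeasurable hu)

lemma memLp_bracketDeriv {p : ENNReal} {u γ : Ω → H} (hu : AEStronglyMeasurable u P)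
    (hγ : MemLp γ p P) : MemLp (fun ω => bracketDeriv (u ω) (γ ω)) p P :=
  hγ.norm.mono'
    ((hu.inner hγ.aestronglyMeasurable).div₀
      (continuous_japaneseBracket.comp_aestronglyMeasurable hu))
    (.of_forall fun ω => abs_bracketDeriv_le (u ω) (γ ω))

end JapaneseBracket

namespace IsInnovation

variable {Ω : Type*} {mΩ : MeasurableSpace Ω} {𝓖 : Filtration ℕ mΩ} {P : Measure Ω}
  {H : Type*} [NormedAddCommGroup H] [InnerProductSpace ℝ H]
  {n : ℕ} {ξ F : Ω → ℝ} {u γ : Ω → H} {c : ℝ}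

lemma memLp_bracketIncrement (hξ : IsInnovation 𝓖 P n ξ) (hu : StronglyMeasurable[𝓖 n] u)
    (hγ : StronglyMeasurable[𝓖 n] γ) (hγ2 : MemLp γ 2 P) :
    MemLp (fun ω => bracketIncrement (u ω) (ξ ω • γ ω)) 2 P := by
  have hu' : AEStronglyMeasurable u P := (hu.mono (𝓖.le n)).aestronglyMeasurable
  refine (hξ.memLp_mul hγ.norm hγ2.norm).mono
    ((continuous_japaneseBracket.comp_aestronglyMeasurable
      (hu'.add (hξ.memLp.aestronglyMeasurable.smul hγ2.aestronglyMeasurable))).sub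
      (continuous_japaneseBracket.comp_aestronglyMeasurable hu')) (.of_forall fun ω => ?_)
  simpa [norm_smul, mul_comm] using abs_bracketIncrement_le (u ω) (ξ ω • γ ω)

lemma integral_sq_bracketIncrement_le (hξ : IsInnovation 𝓖 P n ξ)
    (hγ : StronglyMeasurable[𝓖 n] γ) (hγ2 : MemLp γ 2 P) :
    ∫ ω, bracketIncrement (u ω) (ξ ω • γ ω) ^ 2 ∂P ≤
      (∫ ω, ‖γ ω‖ ^ 2 ∂P) * ∫ ω, ξ ω ^ 2 ∂P := by
  have hγ_sq : StronglyMeasurable[𝓖 n] (fun ω => ‖γ ω‖ ^ 2) := hγ.norm.pow 2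
  rw [← hξ.integral_mul_sq hγ_sq]
  refine integral_mono_of_nonneg (.of_forall fun ω => sq_nonneg _)
    (hξ.integrable_mul_sq hγ_sq hγ2.norm.integrable_sq) (.of_forall fun ω => ?_)
  simpa [norm_smul, mul_pow, mul_comm] using
    pow_le_pow_left₀ (abs_nonneg _) (abs_bracketIncrement_le (u ω) (ξ ω • γ ω)) 2

lemma condExp_bracketIncrement_nonneg [IsFiniteMeasure P] (hξ : IsInnovation 𝓖 P n ξ)
    (hu : StronglyMeasurable[𝓖 n] u) (hγ : StronglyMeasurable[𝓖 n] γ) (hγ2 : MemLp γ 2 P) :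
    0 ≤ᵐ[P] P[fun ω => bracketIncrement (u ω) (ξ ω • γ ω) | 𝓖 n] := by
  have hD := stronglyMeasurable_bracketDeriv hu hγ
  have hDi := (memLp_bracketDeriv (hu.mono (𝓖.le n)).aestronglyMeasurable hγ2).integrable one_le_two
  refine (hξ.condExp_mul hD hDi).symm.le.trans (condExp_mono (hξ.integrable_mul hD hDi)
    ((hξ.memLp_bracketIncrement hu hγ hγ2).integrable one_le_two) (.of_forall fun ω => ?_))
  exact (bracketDeriv_smul _ _ _).symm.trans_le (bracketDeriv_le_bracketIncrement _ _)

lemma integral_mul_bracketIncrement_le [IsFiniteMeasure P] (hξ : IsInnovation 𝓖 P n ξ)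
    (hu : StronglyMeasurable[𝓖 n] u) (hγ : StronglyMeasurable[𝓖 n] γ) (hγ2 : MemLp γ 2 P)
    (hc : 0 ≤ c) (hγu : ∀ ω, ‖γ ω‖ ^ 2 ≤ c * japaneseBracket (u ω) ^ 2)
    (hF : StronglyMeasurable[𝓖 n] F) (hF2 : MemLp F 2 P)
    (huF : ∀ᵐ ω ∂P, japaneseBracket (u ω) ≤ F ω) :
    ∫ ω, F ω * bracketIncrement (u ω) (ξ ω • γ ω) ∂P ≤
      c / 2 * ((∫ ω, F ω ^ 2 ∂P) * ∫ ω, ξ ω ^ 2 ∂P) := by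
  have hD2 : MemLp (fun ω => bracketDeriv (u ω) (γ ω)) 2 P :=
    memLp_bracketDeriv (hu.mono (𝓖.le n)).aestronglyMeasurable hγ2
  have hFD : StronglyMeasurable[𝓖 n] (fun ω => F ω * bracketDeriv (u ω) (γ ω)) :=
    hF.mul (stronglyMeasurable_bracketDeriv hu hγ)
  have hF_sq : StronglyMeasurable[𝓖 n] (fun ω => F ω ^ 2) := hF.pow 2
  have hlin : Integrable (fun ω => F ω * bracketDeriv (u ω) (γ ω) * ξ ω) P :=
    hξ.integrable_mul hFD (hF2.integrable_mul hD2)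
  have hquad : Integrable (fun ω => c / 2 * (F ω ^ 2 * ξ ω ^ 2)) P :=
    (hξ.integrable_mul_sq hF_sq hF2.integrable_sq).const_mul _
  calc ∫ ω, F ω * bracketIncrement (u ω) (ξ ω • γ ω) ∂P
      ≤ ∫ ω, (F ω * bracketDeriv (u ω) (γ ω) * ξ ω + c / 2 * (F ω ^ 2 * ξ ω ^ 2)) ∂P := by
        refine integral_mono_ae (hF2.integrable_mul (hξ.memLp_bracketIncrement hu hγ hγ2))
          (hlin.add hquad) ?_
        filter_upwards [huF] with ω hω using mul_bracketIncrement_smul_le hc (hγu ω) hω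
    _ = c / 2 * ((∫ ω, F ω ^ 2 ∂P) * ∫ ω, ξ ω ^ 2 ∂P) := by
        rw [integral_add hlin hquad, hξ.integral_mul hFD, zero_add, integral_const_mul,
          hξ.integral_mul_sq hF_sq]

lemma integral_sq_add_bracketIncrement_le [IsFiniteMeasure P] (hξ : IsInnovation 𝓖 P n ξ)
    (hu : StronglyMeasurable[𝓖 n] u) (hγ : StronglyMeasurable[𝓖 n] γ) (hγ2 : MemLp γ 2 P)
    (hc : 0 ≤ c) (hγu : ∀ ω, ‖γ ω‖ ^ 2 ≤ c * japaneseBracket (u ω) ^ 2)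
    (hF : StronglyMeasurable[𝓖 n] F) (hF2 : MemLp F 2 P)
    (huF : ∀ᵐ ω ∂P, japaneseBracket (u ω) ≤ F ω) :
    ∫ ω, (F ω + bracketIncrement (u ω) (ξ ω • γ ω)) ^ 2 ∂P ≤
      (1 + 2 * c * ∫ ω, ξ ω ^ 2 ∂P) * ∫ ω, F ω ^ 2 ∂P := by
  have hd := hξ.memLp_bracketIncrement hu hγ hγ2
  have hγF : ∫ ω, ‖γ ω‖ ^ 2 ∂P ≤ c * ∫ ω, F ω ^ 2 ∂P := by
    rw [← integral_const_mul]
    refine integral_mono_ae hγ2.norm.integrable_sq (hF2.integrable_sq.const_mul c) ?_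
    filter_upwards [huF] with ω hω
    have := japaneseBracket_pos (u ω)
    exact (hγu ω).trans (by gcongr)
  have hξγ := (hξ.integral_sq_bracketIncrement_le (u := u) hγ hγ2).trans
    (mul_le_mul_of_nonneg_right hγF (integral_nonneg fun ω => sq_nonneg (ξ ω)))
  rw [integral_add_sq hF2 hd]
  linarith [hξ.integral_mul_bracketIncrement_le hu hγ hγ2 hc hγu hF hF2 huF]

end IsInnovation

section MaximalBound

variable {Ω : Type*} {mΩ : MeasurableSpace Ω} {𝓖 : Filtration ℕ mΩ} {P : Measure Ω}
  {H : Type*} [NormedAddCommGroup H] [InnerProductSpace ℝ H]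
  {u γ : ℕ → Ω → H} {ξ : ℕ → Ω → ℝ} {c : ℝ}

/-- The process `⟨u₀⟩ + ∑_{k<n} (⟨u_k + ξ_k γ_k⟩ - ⟨u_k⟩)`, which dominates `⟨u_n⟩` as soon as
`‖u_{k+1}‖ ≤ ‖u_k + ξ_k γ_k‖` for all `k`. -/
noncomputable def bracketMajorant (u γ : ℕ → Ω → H) (ξ : ℕ → Ω → ℝ) (n : ℕ) (ω : Ω) : ℝ :=
  japaneseBracket (u 0 ω) + ∑ k ∈ Finset.range n, bracketIncrement (u k ω) (ξ k ω • γ k ω)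

lemma bracketMajorant_zero (ω : Ω) : bracketMajorant u γ ξ 0 ω = japaneseBracket (u 0 ω) := by
  simp [bracketMajorant]

lemma bracketMajorant_succ (n : ℕ) (ω : Ω) :
    bracketMajorant u γ ξ (n + 1) ω =
      bracketMajorant u γ ξ n ω + bracketIncrement (u n ω) (ξ n ω • γ n ω) := by
  rw [bracketMajorant, bracketMajorant, Finset.sum_range_succ, add_assoc]

lemma japaneseBracket_le_bracketMajorant {ω : Ω}
    (hstep : ∀ n, ‖u (n + 1) ω‖ ≤ ‖u n ω + ξ n ω • γ n ω‖) (n : ℕ) :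
    japaneseBracket (u n ω) ≤ bracketMajorant u γ ξ n ω := by
  induction n with
  | zero => rw [bracketMajorant_zero]
  | succ n ih =>
    calc japaneseBracket (u (n + 1) ω) ≤ japaneseBracket (u n ω + ξ n ω • γ n ω) :=
          japaneseBracket_le_of_norm_le (hstep n)
      _ = japaneseBracket (u n ω) + bracketIncrement (u n ω) (ξ n ω • γ n ω) := by
          rw [bracketIncrement, add_sub_cancel]
      _ ≤ bracketMajorant u γ ξ (n + 1) ω := by rw [bracketMajorant_succ]; gcongr

lemma stronglyAdapted_bracketMajorant (hu : StronglyAdapted 𝓖 u) (hγ : StronglyAdapted 𝓖 γ)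
    (hξ : ∀ n, IsInnovation 𝓖 P n (ξ n)) : StronglyAdapted 𝓖 (bracketMajorant u γ ξ) := by
  have hbracket {m : MeasurableSpace Ω} {x : Ω → H} (hx : StronglyMeasurable[m] x) :
      StronglyMeasurable[m] (fun ω => japaneseBracket (x ω)) :=
    continuous_japaneseBracket.comp_stronglyMeasurable hx
  intro n
  refine (hbracket ((hu 0).mono (𝓖.mono n.zero_le))).add
    (Finset.stronglyMeasurable_fun_sum _ fun k hk => ?_)
  have hkn : k + 1 ≤ n := Finset.mem_range.1 hk
  have hu_k := (hu k).mono (𝓖.mono (k.le_succ.trans hkn))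
  have hγ_k := (hγ k).mono (𝓖.mono (k.le_succ.trans hkn))
  have hξ_k := (hξ k).measurable.stronglyMeasurable.mono (𝓖.mono hkn)
  exact (hbracket (hu_k.add (hξ_k.smul hγ_k))).sub (hbracket hu_k)

/-- `IsEulerDominated 𝓖 P c u γ ξ`: at every step the adapted process `u` is dominated in norm by
the explicit Euler step `u + ξ γ`, where `ξ` is an innovation and the adapted coefficient `γ` has
linear growth in `u`. -/
structure IsEulerDominated (𝓖 : Filtration ℕ mΩ) (P : Measure Ω) (c : ℝ) (u γ : ℕ → Ω → H)
    (ξ : ℕ → Ω → ℝ) : Prop where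
  stronglyAdapted : StronglyAdapted 𝓖 u
  stronglyAdapted_coeff : StronglyAdapted 𝓖 γ
  isInnovation : ∀ n, IsInnovation 𝓖 P n (ξ n)
  memLp_zero : MemLp (u 0) 2 P
  growth_nonneg : 0 ≤ c
  sq_norm_coeff_le : ∀ n ω, ‖γ n ω‖ ^ 2 ≤ c * (1 + ‖u n ω‖ ^ 2)
  norm_succ_le : ∀ n, ∀ᵐ ω ∂P, ‖u (n + 1) ω‖ ≤ ‖u n ω + ξ n ω • γ n ω‖

namespace IsEulerDominated

lemma sq_norm_coeff_le_sq_japaneseBracket (h : IsEulerDominated 𝓖 P c u γ ξ) (n : ℕ) (ω : Ω) :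
    ‖γ n ω‖ ^ 2 ≤ c * japaneseBracket (u n ω) ^ 2 := by
  rw [sq_japaneseBracket]
  exact h.sq_norm_coeff_le n ω

lemma ae_japaneseBracket_le (h : IsEulerDominated 𝓖 P c u γ ξ) :
    ∀ᵐ ω ∂P, ∀ n, japaneseBracket (u n ω) ≤ bracketMajorant u γ ξ n ω := by
  filter_upwards [ae_all_iff.2 h.norm_succ_le] with ω hω
    using japaneseBracket_le_bracketMajorant hω

lemma memLp_coeff (h : IsEulerDominated 𝓖 P c u γ ξ) {n : ℕ}
    (hM : MemLp (bracketMajorant u γ ξ n) 2 P) : MemLp (γ n) 2 P := by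
  refine memLp_of_sq_norm_le (c := c)
    ((h.stronglyAdapted_coeff n).mono (𝓖.le n)).aestronglyMeasurable hM ?_
  filter_upwards [h.ae_japaneseBracket_le] with ω hω
  have hu := japaneseBracket_pos (u n ω)
  have hc := h.growth_nonneg
  exact (h.sq_norm_coeff_le_sq_japaneseBracket n ω).trans (by gcongr; exact hω n)

lemma memLp_bracketMajorant [IsFiniteMeasure P] (h : IsEulerDominated 𝓖 P c u γ ξ) (n : ℕ) :
    MemLp (bracketMajorant u γ ξ n) 2 P := by
  induction n with
  | zero =>
    simpa only [funext bracketMajorant_zero] using memLp_japaneseBracket h.memLp_zero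
  | succ n ih =>
    simp only [funext (bracketMajorant_succ n)]
    exact ih.add ((h.isInnovation n).memLp_bracketIncrement (h.stronglyAdapted n)
      (h.stronglyAdapted_coeff n) (h.memLp_coeff ih))

lemma submartingale_bracketMajorant [IsFiniteMeasure P] (h : IsEulerDominated 𝓖 P c u γ ξ) :
    Submartingale (bracketMajorant u γ ξ) 𝓖 P := by
  refine submartingale_of_condExp_sub_nonneg_nat
    (stronglyAdapted_bracketMajorant h.stronglyAdapted h.stronglyAdapted_coeff h.isInnovation)
    (fun n => (h.memLp_bracketMajorant n).integrable one_le_two) fun n => ?_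
  have hincrement : bracketMajorant u γ ξ (n + 1) - bracketMajorant u γ ξ n =
      fun ω => bracketIncrement (u n ω) (ξ n ω • γ n ω) := by
    ext ω
    rw [Pi.sub_apply, bracketMajorant_succ, add_sub_cancel_left]
  rw [hincrement]
  exact (h.isInnovation n).condExp_bracketIncrement_nonneg (h.stronglyAdapted n)
    (h.stronglyAdapted_coeff n) (h.memLp_coeff (h.memLp_bracketMajorant n))

lemma integral_sq_bracketMajorant_succ_le [IsFiniteMeasure P] (h : IsEulerDominated 𝓖 P c u γ ξ)
    (n : ℕ) :
    ∫ ω, bracketMajorant u γ ξ (n + 1) ω ^ 2 ∂P ≤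
      (1 + 2 * c * ∫ ω, ξ n ω ^ 2 ∂P) * ∫ ω, bracketMajorant u γ ξ n ω ^ 2 ∂P := by
  simp only [bracketMajorant_succ]
  exact (h.isInnovation n).integral_sq_add_bracketIncrement_le (h.stronglyAdapted n)
    (h.stronglyAdapted_coeff n) (h.memLp_coeff (h.memLp_bracketMajorant n)) h.growth_nonneg
    (h.sq_norm_coeff_le_sq_japaneseBracket n) (h.submartingale_bracketMajorant.stronglyAdapted n)
    (h.memLp_bracketMajorant n) (h.ae_japaneseBracket_le.mono fun _ hω => hω n)

lemma integral_sq_bracketMajorant_zero [IsProbabilityMeasure P]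
    (h : IsEulerDominated 𝓖 P c u γ ξ) :
    ∫ ω, bracketMajorant u γ ξ 0 ω ^ 2 ∂P = 1 + ∫ ω, ‖u 0 ω‖ ^ 2 ∂P := by
  simp only [bracketMajorant_zero, sq_japaneseBracket]
  rw [integral_add (integrable_const 1) h.memLp_zero.norm.integrable_sq, integral_const,
    probReal_univ, one_smul]

lemma integral_sq_bracketMajorant_le [IsProbabilityMeasure P]
    (h : IsEulerDominated 𝓖 P c u γ ξ) (n : ℕ) :
    ∫ ω, bracketMajorant u γ ξ n ω ^ 2 ∂P ≤
      Real.exp (2 * c * ∑ k ∈ Finset.range n, ∫ ω, ξ k ω ^ 2 ∂P) *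
        (1 + ∫ ω, ‖u 0 ω‖ ^ 2 ∂P) := by
  have hgrowth (k : ℕ) : 0 ≤ 2 * c * ∫ ω, ξ k ω ^ 2 ∂P :=
    mul_nonneg (mul_nonneg zero_le_two h.growth_nonneg) (integral_nonneg fun ω => sq_nonneg _)
  have hgronwall := discrete_gronwall (n₀ := 0) (b := 0)
    (u := fun k => ∫ ω, bracketMajorant u γ ξ k ω ^ 2 ∂P)
    (integral_nonneg fun ω => sq_nonneg (bracketMajorant u γ ξ 0 ω))
    (fun k _ => (h.integral_sq_bracketMajorant_succ_le k).trans_eq (add_zero _).symm)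
    (fun k _ => hgrowth k) (fun _ _ => le_rfl) n.zero_le
  simpa only [Pi.zero_apply, Finset.sum_const_zero, add_zero, ← Finset.mul_sum,
    Nat.Ico_zero_eq_range, h.integral_sq_bracketMajorant_zero, mul_comm] using hgronwall

lemma ae_sup'_sq_norm_le (h : IsEulerDominated 𝓖 P c u γ ξ) (N : ℕ) :
    ∀ᵐ ω ∂P, (Finset.range (N + 1)).sup' Finset.nonempty_range_add_one (fun n => ‖u n ω‖ ^ 2) ≤
      partialSups (bracketMajorant u γ ξ) N ω ^ 2 := by
  filter_upwards [h.ae_japaneseBracket_le] with ω hω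
  refine Finset.sup'_le _ _ fun n hn => ?_
  gcongr
  exact (norm_le_japaneseBracket _).trans <| (hω n).trans <|
    le_partialSups_of_le (bracketMajorant u γ ξ) (Finset.mem_range_succ_iff.1 hn) ω

lemma integrable_sup'_sq_norm [IsFiniteMeasure P] (h : IsEulerDominated 𝓖 P c u γ ξ) (N : ℕ) :
    Integrable (fun ω => (Finset.range (N + 1)).sup' Finset.nonempty_range_add_one
      (fun n => ‖u n ω‖ ^ 2)) P := by
  refine (memLp_partialSups h.memLp_bracketMajorant N).integrable_sq.mono' ?_ ?_
  · refine (Finset.measurable_range_sup'' fun n _ => ?_).aestronglyMeasurable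
    exact (((h.stronglyAdapted n).mono (𝓖.le n)).norm.pow 2).measurable
  · filter_upwards [h.ae_sup'_sq_norm_le N] with ω hω
    rwa [Real.norm_of_nonneg]
    exact (sq_nonneg ‖u 0 ω‖).trans
      (Finset.le_sup' (fun n => ‖u n ω‖ ^ 2) (Finset.mem_range.2 N.succ_pos))

theorem integral_sup'_sq_norm_le [IsProbabilityMeasure P] (h : IsEulerDominated 𝓖 P c u γ ξ)
    (N : ℕ) :
    ∫ ω, (Finset.range (N + 1)).sup' Finset.nonempty_range_add_one (fun n => ‖u n ω‖ ^ 2) ∂P ≤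
      4 * Real.exp (2 * c * ∑ n ∈ Finset.range N, ∫ ω, ξ n ω ^ 2 ∂P) *
        (1 + ∫ ω, ‖u 0 ω‖ ^ 2 ∂P) := by
  have hM0 : 0 ≤ bracketMajorant u γ ξ 0 := fun ω => by
    rw [bracketMajorant_zero]
    exact (japaneseBracket_pos _).le
  calc ∫ ω, (Finset.range (N + 1)).sup' Finset.nonempty_range_add_one (fun n => ‖u n ω‖ ^ 2) ∂P
      ≤ ∫ ω, partialSups (bracketMajorant u γ ξ) N ω ^ 2 ∂P :=
        integral_mono_ae (h.integrable_sup'_sq_norm N)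
          (memLp_partialSups h.memLp_bracketMajorant N).integrable_sq (h.ae_sup'_sq_norm_le N)
    _ ≤ 4 * ∫ ω, bracketMajorant u γ ξ N ω ^ 2 ∂P :=
        integral_sq_partialSups_le h.submartingale_bracketMajorant hM0 h.memLp_bracketMajorant N
    _ ≤ 4 * Real.exp (2 * c * ∑ n ∈ Finset.range N, ∫ ω, ξ n ω ^ 2 ∂P) *
          (1 + ∫ ω, ‖u 0 ω‖ ^ 2 ∂P) := by
        rw [mul_assoc]
        gcongr
        exact h.integral_sq_bracketMajorant_le N

lemma of_forall_lt [IsProbabilityMeasure P] {N : ℕ} (hu : ∀ n ≤ N, StronglyMeasurable[𝓖 n] (u n))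
    (hγ : ∀ n < N, StronglyMeasurable[𝓖 n] (γ n)) (hξ : ∀ n < N, IsInnovation 𝓖 P n (ξ n))
    (hu0 : MemLp (u 0) 2 P) (hc : 0 ≤ c)
    (hγu : ∀ n < N, ∀ ω, ‖γ n ω‖ ^ 2 ≤ c * (1 + ‖u n ω‖ ^ 2))
    (hstep : ∀ n < N, ∀ᵐ ω ∂P, ‖u (n + 1) ω‖ ≤ ‖u n ω + ξ n ω • γ n ω‖) :
    IsEulerDominated 𝓖 P c (fun n => u (min n N)) (fun n => if n < N then γ n else 0)
      (fun n => if n < N then ξ n else 0) where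
  stronglyAdapted n := (hu _ (min_le_right n N)).mono (𝓖.mono (min_le_left n N))
  stronglyAdapted_coeff n := by
    by_cases hn : n < N
    · simpa only [if_pos hn] using hγ n hn
    · simpa only [if_neg hn] using stronglyMeasurable_zero
  isInnovation n := by
    by_cases hn : n < N
    · simpa only [if_pos hn] using hξ n hn
    · simpa only [if_neg hn] using IsInnovation.zero
  memLp_zero := by simpa only [Nat.zero_min] using hu0
  growth_nonneg := hc
  sq_norm_coeff_le n ω := by
    by_cases hn : n < N
    · simpa only [if_pos hn, min_eq_left hn.le] using hγu n hn ω
    · simp only [if_neg hn, Pi.zero_apply, norm_zero]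
      rw [zero_pow two_ne_zero]
      positivity
  norm_succ_le n := by
    by_cases hn : n < N
    · simpa only [if_pos hn, min_eq_left hn.le, min_eq_left (Nat.succ_le_of_lt hn)]
        using hstep n hn
    · have hNn : N ≤ n := not_lt.1 hn
      simp [if_neg hn, min_eq_right hNn, min_eq_right (hNn.trans n.le_succ)]

end IsEulerDominated

end MaximalBound

section FiniteVolume

variable {V : Type} [Fintype V] {m : V → ℝ} {τ : V → V → ℝ}

lemma normSq_nonneg (hm : ∀ K, 0 ≤ m K) (w : V → ℝ) : 0 ≤ normSq m w :=
  Finset.sum_nonneg fun K _ => mul_nonneg (hm K) (sq_nonneg _)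

lemma seminormSq_nonneg (hτ_nonneg : ∀ K K', 0 ≤ τ K K') (w : V → ℝ) : 0 ≤ seminormSq τ w :=
  mul_nonneg one_half_pos.le <| Finset.sum_nonneg fun K _ => Finset.sum_nonneg fun K' _ =>
    mul_nonneg (hτ_nonneg K K') (sq_nonneg _)

lemma sum_sum_mul_sub_mul_eq_seminormSq (hτ_symm : ∀ K K', τ K K' = τ K' K) (w : V → ℝ) :
    ∑ K, (∑ K', τ K K' * (w K - w K')) * w K = seminormSq τ w := by
  have hswap : ∑ K, ∑ K', τ K K' * (w K - w K') * w K =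
      ∑ K, ∑ K', τ K K' * (w K' - w K) * w K' := by
    rw [Finset.sum_comm]
    simp only [fun K K' => hτ_symm K' K]
  have hsum : ∑ K, ∑ K', τ K K' * (w K - w K') ^ 2 =
      ∑ K, ∑ K', τ K K' * (w K - w K') * w K + ∑ K, ∑ K', τ K K' * (w K' - w K) * w K' := by
    simp only [← Finset.sum_add_distrib]
    exact Finset.sum_congr rfl fun K _ => Finset.sum_congr rfl fun K' _ => by ring
  simp only [Finset.sum_mul]
  rw [seminormSq, hsum, ← hswap]
  ring

lemma normSq_le_normSq_of_implicit_step (hm : ∀ K, 0 ≤ m K) (hτ_symm : ∀ K K', τ K K' = τ K' K)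
    (hτ_nonneg : ∀ K K', 0 ≤ τ K K') {δ : ℝ} (hδ : 0 < δ) {v w : V → ℝ}
    (hstep : ∀ K, m K / δ * (v K - w K) + ∑ K', τ K K' * (v K - v K') = 0) :
    normSq m v ≤ normSq m w := by
  have hdissipation : ∑ K, m K * ((v K - w K) * v K) = -(δ * seminormSq τ v) := by
    rw [← sum_sum_mul_sub_mul_eq_seminormSq hτ_symm, Finset.mul_sum, ← Finset.sum_neg_distrib]
    refine Finset.sum_congr rfl fun K _ => ?_
    have hK := hstep K
    field_simp at hK
    linear_combination v K * hK
  have hpolar : normSq m v - normSq m w ≤ 2 * ∑ K, m K * ((v K - w K) * v K) := by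
    rw [normSq, normSq, ← Finset.sum_sub_distrib, Finset.mul_sum]
    refine Finset.sum_le_sum fun K _ => ?_
    linarith [mul_nonneg (hm K) (sq_nonneg (v K - w K))]
  linarith [mul_nonneg hδ.le (seminormSq_nonneg hτ_nonneg v)]

lemma normSq_comp_le (hm : ∀ K, 0 ≤ m K) {g : ℝ → ℝ} {L g₀ : ℝ}
    (hg : ∀ r, |g r| ≤ L * |r| + g₀) (w : V → ℝ) :
    normSq m (fun K => g (w K)) ≤ (2 * L ^ 2 + 2 * g₀ ^ 2 * ∑ K, m K) * (1 + normSq m w) := by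
  have hsq (r : ℝ) : g r ^ 2 ≤ 2 * L ^ 2 * r ^ 2 + 2 * g₀ ^ 2 := by
    calc g r ^ 2 = |g r| ^ 2 := (sq_abs _).symm
      _ ≤ (L * |r| + g₀) ^ 2 := by gcongr; exact hg r
      _ ≤ 2 * ((L * |r|) ^ 2 + g₀ ^ 2) := add_sq_le
      _ = 2 * L ^ 2 * r ^ 2 + 2 * g₀ ^ 2 := by rw [mul_pow, sq_abs]; ring
  calc normSq m (fun K => g (w K))
      ≤ ∑ K, m K * (2 * L ^ 2 * w K ^ 2 + 2 * g₀ ^ 2) :=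
        Finset.sum_le_sum fun K _ => mul_le_mul_of_nonneg_left (hsq _) (hm K)
    _ = 2 * L ^ 2 * normSq m w + 2 * g₀ ^ 2 * ∑ K, m K := by
        rw [normSq, Finset.mul_sum, Finset.mul_sum, ← Finset.sum_add_distrib]
        exact Finset.sum_congr rfl fun K _ => by ring
    _ ≤ (2 * L ^ 2 + 2 * g₀ ^ 2 * ∑ K, m K) * (1 + normSq m w) := by
        have hmass : 0 ≤ ∑ K, m K := Finset.sum_nonneg fun K _ => hm K
        have hL : 0 ≤ 2 * L ^ 2 := by positivity
        have hcross := mul_nonneg (mul_nonneg (sq_nonneg g₀) hmass) (normSq_nonneg hm w)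
        linarith

/-- The map `w ↦ (√(m K) w K)_K` into Euclidean space, which turns the discrete `L²` norm into the
Euclidean one. -/
noncomputable def weightedEmbedding {ι : Type*} (m : ι → ℝ) : (ι → ℝ) →ₗ[ℝ] EuclideanSpace ℝ ι :=
  (WithLp.linearEquiv 2 ℝ (ι → ℝ)).symm.toLinearMap ∘ₗ LinearMap.mulLeft ℝ (fun K => √(m K))

lemma sq_norm_weightedEmbedding (hm : ∀ K, 0 ≤ m K) (w : V → ℝ) :
    ‖weightedEmbedding m w‖ ^ 2 = normSq m w := by
  simp [weightedEmbedding, EuclideanSpace.norm_sq_eq, normSq, mul_pow, Real.sq_sqrt (hm _)]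

lemma norm_weightedEmbedding_le (hm : ∀ K, 0 ≤ m K) {v w : V → ℝ}
    (h : normSq m v ≤ normSq m w) : ‖weightedEmbedding m v‖ ≤ ‖weightedEmbedding m w‖ := by
  refine le_of_sq_le_sq ?_ (norm_nonneg _)
  rwa [sq_norm_weightedEmbedding hm, sq_norm_weightedEmbedding hm]

lemma stronglyMeasurable_weightedEmbedding {ι Ω : Type*} [Finite ι] {m : ι → ℝ}
    {𝓕 : MeasurableSpace Ω} {w : Ω → ι → ℝ} (hw : Measurable[𝓕] w) :
    StronglyMeasurable[𝓕] (fun ω => weightedEmbedding m (w ω)) := by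
  have := Fintype.ofFinite ι
  exact (weightedEmbedding m).continuous_of_finiteDimensional.comp_stronglyMeasurable
    hw.stronglyMeasurable

variable {Ω : Type*} {mΩ : MeasurableSpace Ω} {𝓖 : Filtration ℕ mΩ} {P : Measure Ω} {N : ℕ}
  {g : ℝ → ℝ} {L g₀ : ℝ} {δ : ℕ → ℝ} {ξ : ℕ → Ω → ℝ} {u : ℕ → Ω → V → ℝ}

lemma isEulerDominated_weightedEmbedding [IsProbabilityMeasure P] (hm : ∀ K, 0 ≤ m K)
    (hτ_symm : ∀ K K', τ K K' = τ K' K) (hτ_nonneg : ∀ K K', 0 ≤ τ K K')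
    (hδ : ∀ n < N, 0 < δ n) (hg : Measurable g) (hg_growth : ∀ r, |g r| ≤ L * |r| + g₀)
    (hξ : ∀ n < N, IsInnovation 𝓖 P n (ξ n)) (hu : ∀ n ≤ N, Measurable[𝓖 n] (u n))
    (hu0 : Integrable (fun ω => normSq m (u 0 ω)) P)
    (hscheme : ∀ n < N, ∀ᵐ ω ∂P, ∀ K,
      m K / δ n * (u (n + 1) ω K - u n ω K) + ∑ K', τ K K' * (u (n + 1) ω K - u (n + 1) ω K') =
        m K / δ n * g (u n ω K) * ξ n ω) :
    IsEulerDominated 𝓖 P (2 * L ^ 2 + 2 * g₀ ^ 2 * ∑ K, m K)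
      (fun n ω => weightedEmbedding m (u (min n N) ω))
      (fun n => if n < N then fun ω => weightedEmbedding m (fun K => g (u n ω K)) else 0)
      (fun n => if n < N then ξ n else 0) := by
  have hU (n : ℕ) (hn : n ≤ N) : StronglyMeasurable[𝓖 n] (fun ω => weightedEmbedding m (u n ω)) :=
    stronglyMeasurable_weightedEmbedding (hu n hn)
  have hg_pi : Measurable (fun (w : V → ℝ) K => g (w K)) :=
    measurable_pi_lambda _ fun K => hg.comp (measurable_pi_apply K)
  refine IsEulerDominated.of_forall_lt (u := fun n ω => weightedEmbedding m (u n ω)) hU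
    (fun n hn => stronglyMeasurable_weightedEmbedding (hg_pi.comp (hu n hn.le))) hξ
    ?_ ?_ (fun n _ ω => ?_) fun n hn => ?_
  · refine (memLp_two_iff_integrable_sq_norm
      ((hU 0 N.zero_le).mono (𝓖.le 0)).aestronglyMeasurable).2 ?_
    simpa only [sq_norm_weightedEmbedding hm] using hu0
  · have hmass : 0 ≤ ∑ K, m K := Finset.sum_nonneg fun K _ => hm K
    positivity
  · simpa only [sq_norm_weightedEmbedding hm] using normSq_comp_le hm hg_growth (u n ω)
  · filter_upwards [hscheme n hn] with ω hω
    rw [← map_smul, ← map_add]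
    refine norm_weightedEmbedding_le hm
      (normSq_le_normSq_of_implicit_step hm hτ_symm hτ_nonneg (hδ n hn) fun K => ?_)
    simp only [Pi.add_apply, Pi.smul_apply, smul_eq_mul]
    linear_combination hω K

theorem maximal_moment_bound_general [IsProbabilityMeasure P] (hm : ∀ K, 0 ≤ m K)
    (hτ_symm : ∀ K K', τ K K' = τ K' K) (hτ_nonneg : ∀ K K', 0 ≤ τ K K')
    (hδ : ∀ n < N, 0 < δ n) (hg : Measurable g) (hg_growth : ∀ r, |g r| ≤ L * |r| + g₀)
    (hξ : ∀ n < N, IsInnovation 𝓖 P n (ξ n)) (hu : ∀ n ≤ N, Measurable[𝓖 n] (u n))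
    (hu0 : Integrable (fun ω => normSq m (u 0 ω)) P)
    (hscheme : ∀ n < N, ∀ᵐ ω ∂P, ∀ K,
      m K / δ n * (u (n + 1) ω K - u n ω K) + ∑ K', τ K K' * (u (n + 1) ω K - u (n + 1) ω K') =
        m K / δ n * g (u n ω K) * ξ n ω) :
    Integrable (fun ω => (Finset.range (N + 1)).sup' Finset.nonempty_range_add_one
        (fun n => normSq m (u n ω))) P ∧
      ∫ ω, (Finset.range (N + 1)).sup' Finset.nonempty_range_add_one
          (fun n => normSq m (u n ω)) ∂P ≤
        4 * Real.exp (2 * (2 * L ^ 2 + 2 * g₀ ^ 2 * ∑ K, m K) *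
            ∑ n ∈ Finset.range N, ∫ ω, ξ n ω ^ 2 ∂P) *
          (1 + ∫ ω, normSq m (u 0 ω) ∂P) := by
  have h := isEulerDominated_weightedEmbedding hm hτ_symm hτ_nonneg hδ hg hg_growth hξ hu hu0
    hscheme
  have hsup (ω : Ω) : (Finset.range (N + 1)).sup' Finset.nonempty_range_add_one
        (fun n => normSq m (u (min n N) ω)) =
      (Finset.range (N + 1)).sup' Finset.nonempty_range_add_one (fun n => normSq m (u n ω)) :=
    Finset.sup'_congr _ rfl fun n hn => by
      rw [min_eq_left (Finset.mem_range_succ_iff.1 hn)]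
  have hnoise : ∑ n ∈ Finset.range N, ∫ ω, (if n < N then ξ n else 0) ω ^ 2 ∂P =
      ∑ n ∈ Finset.range N, ∫ ω, ξ n ω ^ 2 ∂P :=
    Finset.sum_congr rfl fun n hn => by rw [if_pos (Finset.mem_range.1 hn)]
  have hint := h.integrable_sup'_sq_norm N
  have hbound := h.integral_sup'_sq_norm_le N
  simp only [sq_norm_weightedEmbedding hm, hsup, hnoise, Nat.zero_min] at hint hbound
  exact ⟨hint, hbound⟩

end FiniteVolume

section GaussianNoise

variable {Ω : Type*} {mΩ : MeasurableSpace Ω} {P : Measure Ω} {X : Ω → ℝ} {v : NNReal}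

lemma memLp_of_hasLaw_gaussianReal {μ : ℝ} (hX : HasLaw X (gaussianReal μ v) P) {p : ENNReal}
    (hp : p ≠ ⊤) : MemLp X p P := by
  have hid : MemLp id p (P.map X) := hX.map_eq ▸ memLp_id_gaussianReal' p hp
  exact hid.comp_of_map hX.aemeasurable

lemma integral_sq_of_hasLaw_gaussianReal (hX : HasLaw X (gaussianReal 0 v) P) :
    ∫ ω, X ω ^ 2 ∂P = v := by
  have hmean : ∫ ω, X ω ∂P = 0 := by rw [hX.integral_eq, integral_id_gaussianReal]
  rw [← variance_of_integral_eq_zero hX.aemeasurable hmean, hX.variance_eq,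
    variance_id_gaussianReal]

end GaussianNoise

namespace Scheme

variable {V : Type} [Fintype V] [Nonempty V] {Ω : Type} [mΩ : MeasurableSpace Ω] {T L : ℝ}
  {g : ℝ → ℝ} {N : ℕ}

/-- The discrete filtration `(G n)` of the scheme. -/
def filtration (S : Scheme V Ω T L g N) : Filtration ℕ mΩ := ⟨S.G, S.G_mono, S.G_le⟩

lemma timeStep_pos (S : Scheme V Ω T L g N) : 0 < T / N :=
  div_pos S.T_pos (Nat.cast_pos.2 S.N_pos)

lemma hasLaw_noise (S : Scheme V Ω T L g N) {n : ℕ} (hn : n < N) :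
    HasLaw (S.ΔW (n + 1)) (gaussianReal 0 (T / N).toNNReal) S.P where
  aemeasurable := ((S.ΔW_meas n hn).mono (S.G_le _) le_rfl).aemeasurable
  map_eq := S.ΔW_law n hn

lemma isInnovation_noise (S : Scheme V Ω T L g N) {n : ℕ} (hn : n < N) :
    IsInnovation S.filtration S.P n (S.ΔW (n + 1)) where
  measurable := S.ΔW_meas n hn
  indep := S.ΔW_indep n hn
  memLp := memLp_of_hasLaw_gaussianReal (S.hasLaw_noise hn) ENNReal.ofNat_ne_top
  integral_eq_zero := by rw [(S.hasLaw_noise hn).integral_eq, integral_id_gaussianReal]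

lemma sum_integral_sq_noise (S : Scheme V Ω T L g N) :
    ∑ n ∈ Finset.range N, ∫ ω, S.ΔW (n + 1) ω ^ 2 ∂S.P = T := by
  have hN : (N : ℝ) ≠ 0 := Nat.cast_ne_zero.2 (Nat.one_le_iff_ne_zero.1 S.N_pos)
  calc ∑ n ∈ Finset.range N, ∫ ω, S.ΔW (n + 1) ω ^ 2 ∂S.P = ∑ _n ∈ Finset.range N, T / N :=
        Finset.sum_congr rfl fun n hn => by
          rw [integral_sq_of_hasLaw_gaussianReal (S.hasLaw_noise (Finset.mem_range.1 hn)),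
            Real.coe_toNNReal _ S.timeStep_pos.le]
    _ = T := by rw [Finset.sum_const, Finset.card_range, nsmul_eq_mul, mul_div_cancel₀ T hN]

lemma measurable_nonlinearity (S : Scheme V Ω T L g N) : Measurable g :=
  (LipschitzWith.of_dist_le' (K := L) S.g_lip).continuous.measurable

lemma abs_nonlinearity_le (S : Scheme V Ω T L g N) {g₀ : ℝ} (hg₀ : |g 0| ≤ g₀) (r : ℝ) :
    |g r| ≤ L * |r| + g₀ := by
  have hlip := S.g_lip r 0
  rw [sub_zero] at hlip
  linarith [abs_sub_abs_le_abs_sub (g r) (g 0)]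

end Scheme

/-- **Lemma 3.4, maximal second-moment bound.** For all `T > 0`,
`L ≥ 0`, `g₀ ≥ 0`, `A > 0`, `B ≥ 0` there is a constant `C ≥ 0`, depending only on
`T, L, g₀, A, B`, such that for every scheme (with `Σ m K ≤ A`, `|g 0| ≤ g₀`,
`E[‖u⁰‖_m²] ≤ B`): `E[max_{0≤n≤N} ‖uⁿ‖_m²] ≤ C`. -/
theorem maximal_moment_bound (T L g₀ A B : ℝ)
    (hT : 0 < T) (hL : 0 ≤ L) (hg₀ : 0 ≤ g₀) (hA : 0 < A) (hB : 0 ≤ B) :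
    ∃ C : ℝ, 0 ≤ C ∧
      ∀ (V : Type) [Fintype V] [Nonempty V]
        (Ω : Type) [MeasurableSpace Ω] (g : ℝ → ℝ) (N : ℕ)
        (S : Scheme V Ω T L g N),
        |g 0| ≤ g₀ → (∑ K, S.m K) ≤ A →
        (∫ ω, normSq S.m (S.u 0 ω) ∂S.P) ≤ B →
        (∫ ω, (Finset.range (N + 1)).sup' Finset.nonempty_range_add_one
            (fun n => normSq S.m (S.u n ω)) ∂S.P) ≤ C := by
  refine ⟨4 * Real.exp (2 * (2 * L ^ 2 + 2 * g₀ ^ 2 * A) * T) * (1 + B), by positivity, ?_⟩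
  intro V _ _ Ω _ g N S hg hmass hinit
  have := S.probP
  have hbound := (maximal_moment_bound_general (𝓖 := S.filtration) (δ := fun _ => T / N)
    (fun K => (S.m_pos K).le) S.τ_symm S.τ_nonneg (fun _ _ => S.timeStep_pos)
    S.measurable_nonlinearity (S.abs_nonlinearity_le hg) (fun _ => S.isInnovation_noise) S.u_meas
    S.u0_int S.scheme).2
  rw [S.sum_integral_sq_noise] at hbound
  have hinit_nonneg : 0 ≤ ∫ ω, normSq S.m (S.u 0 ω) ∂S.P :=
    integral_nonneg fun ω => normSq_nonneg (fun K => (S.m_pos K).le) _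
  refine hbound.trans ?_
  gcongr
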